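/- arXiv:math/0008039 — 5 statements merged into one kernel-verified Lean document; each statement's English description precedes it below -/
import Mathlib

section
/- Let L be a bounded partial order (a partial order with least element ⊥ and greatest element ⊤, ⊥ ≠ ⊤) containing an element a with ⊥ < a < ⊤. Define f : Set L₀ → Set L₀ by f(T) = {a} if a ∈ T (a viewed as an element of L₀) and f(T) = ∅ otherwise. Then f is union-preserving, but there is no family (hᵢ)_{i ∈ I} of monotone maps hᵢ : L → L with hᵢ(⊥) = ⊥ such that f(T) = ⋃ᵢ 𝒫hᵢ(T) for every T : Set L₀. -/
/-- The nonzero elements of `L`. -/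
abbrev NZ (L : Type*) [Bot L] : Type _ := {x : L // x ≠ ⊥}

/-- A map between powersets of nonzero elements is union-preserving if it
preserves arbitrary unions. -/
def UnionPres {L M : Type*} [Bot L] [Bot M]
    (f : Set (NZ L) → Set (NZ M)) : Prop :=
  ∀ {ι : Type*} (T : ι → Set (NZ L)), f (⋃ i, T i) = ⋃ i, f (T i)

/-- The direct image map of `g : L → M` on sets of nonzero elements:
`T ↦ {g t | t ∈ T, g t ≠ ⊥}`. -/
def dirIm {L M : Type*} [Bot L] [Bot M] (g : L → M) :
    Set (NZ L) → Set (NZ M) :=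
  fun T => {y | ∃ t ∈ T, g t.val = y.val}

theorem stmt8 {L : Type*} [PartialOrder L] [BoundedOrder L]
    (hbt : (⊥ : L) ≠ ⊤) (a : L) (ha1 : ⊥ < a) (ha2 : a < ⊤)
    (f : Set (NZ L) → Set (NZ L))
    (hfdef : ∀ T : Set (NZ L),
      f T = {y | (⟨a, ha1.ne'⟩ : NZ L) ∈ T ∧ y = (⟨a, ha1.ne'⟩ : NZ L)}) :
    UnionPres f ∧
      ¬ ∃ G : Set (L → L),
        (∀ h ∈ G, Monotone h ∧ h ⊥ = ⊥) ∧
        ∀ T : Set (NZ L), f T = ⋃ h ∈ G, dirIm h T := by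
  refine ⟨?_, ?_⟩
  · intro ι T
    ext y
    simp [hfdef]
  · rintro ⟨G, hG, hf⟩
    have h1 : (⟨a, ha1.ne'⟩ : NZ L) ∈ f {(⟨a, ha1.ne'⟩ : NZ L)} := by
      rw [hfdef]
      exact ⟨rfl, rfl⟩
    rw [hf] at h1
    simp only [Set.mem_iUnion] at h1
    obtain ⟨h, hh, t, ht, hta⟩ := h1
    have ht' : t = ⟨a, ha1.ne'⟩ := ht
    subst ht'
    have hta' : h a = a := hta
    have hle : a ≤ h ⊤ := hta'.symm.le.trans ((hG h hh).1 le_top)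
    have hne : h ⊤ ≠ ⊥ := (ha1.trans_le hle).ne'
    have h2 : (⟨h ⊤, hne⟩ : NZ L) ∈ f {(⟨⊤, hbt.symm⟩ : NZ L)} := by
      rw [hf]
      simp only [Set.mem_iUnion]
      exact ⟨h, hh, ⟨⊤, hbt.symm⟩, rfl, rfl⟩
    rw [hfdef] at h2
    have h3 : (⟨a, ha1.ne'⟩ : NZ L) = ⟨⊤, hbt.symm⟩ := h2.1
    exact ha2.ne (congrArg Subtype.val h3)
end

section
/- Let L be a complete lattice containing an element a with ⊥ < a < ⊤. Define f : Set L₀ → Set L₀ by f(T) = {a} if a ∈ T (a viewed as an element of L₀) and f(T) = ∅ otherwise. Then f is union-preserving, but there exists no map g : L → L satisfying g(⋁T) = ⋁f(T) for every T : Set L₀; in particular f is not a state transition. (Indeed ⋁{⊤} = ⋁{a, ⊤} while ⋁f({⊤}) = ⊥ ≠ a = ⋁f({a, ⊤}).) -/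
/-- The supremum in `L` of a set of nonzero elements of `L`. -/
def lsup {L : Type*} [CompleteLattice L] (T : Set (NZ L)) : L :=
  sSup (Subtype.val '' T)

/-- `g` preserves arbitrary suprema. -/
def PresSup {L M : Type*} [CompleteLattice L] [CompleteLattice M]
    (g : L → M) : Prop :=
  ∀ S : Set L, g (sSup S) = ⨆ s ∈ S, g s

theorem stmt10 {L : Type*} [CompleteLattice L]
    (a : L) (ha1 : ⊥ < a) (ha2 : a < ⊤)
    (f : Set (NZ L) → Set (NZ L))
    (hfdef : ∀ T : Set (NZ L),
      f T = {y | (⟨a, ha1.ne'⟩ : NZ L) ∈ T ∧ y = (⟨a, ha1.ne'⟩ : NZ L)}) :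
    UnionPres f ∧
      ¬ ∃ g : L → L, ∀ T : Set (NZ L), g (lsup T) = lsup (f T) := by
  refine ⟨?_, ?_⟩
  · intro ι T
    ext y
    simp only [hfdef, Set.mem_iUnion, Set.mem_setOf_eq, exists_and_right]
  · rintro ⟨g, hg⟩
    have ht : (⊤ : L) ≠ ⊥ := (ha1.trans ha2).ne'
    let A : NZ L := ⟨a, ha1.ne'⟩
    let t : NZ L := ⟨⊤, ht⟩
    have hne : A ≠ t := fun h => ha2.ne (congrArg Subtype.val h)
    have f1 : f {t} = ∅ := by
      rw [hfdef]
      ext y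
      simp only [Set.mem_setOf_eq, Set.mem_empty_iff_false, iff_false]
      exact fun h => hne h.1
    have f2 : f {A, t} = {A} := by
      rw [hfdef]
      ext y
      exact ⟨fun h => h.2, fun h => ⟨Or.inl rfl, h⟩⟩
    have h1 := hg {t}
    have h2 := hg {A, t}
    rw [f1] at h1
    rw [f2] at h2
    have e1 : lsup ({t} : Set (NZ L)) = ⊤ := by simp [lsup, t]
    have e2 : lsup ({A, t} : Set (NZ L)) = ⊤ := by simp [lsup, t, Set.image_insert_eq]
    have e3 : lsup (∅ : Set (NZ L)) = ⊥ := by simp [lsup]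
    have e4 : lsup ({A} : Set (NZ L)) = a := by simp [lsup, A]
    rw [e1, e3] at h1
    rw [e2, e4] at h2
    exact ha1.ne (h1.symm.trans h2)
end

section
/- Let L be a complete lattice containing elements a, b, c with a < b ⊔ c, ¬(a ≤ b) and ¬(a ≤ c) (these hypotheses imply a, b, c and b ⊔ c are all ≠ ⊥). Define f : Set L₀ → Set L₀ by f(T) = (T \ {b ⊔ c}) ∪ S, where S = {a, b, c} if b ⊔ c ∈ T and S = ∅ otherwise (all elements viewed in L₀). Then f is union-preserving and ⋁f(T) = ⋁T for every T : Set L₀; hence f is a state transition whose property transition is the identity map of L. -/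
theorem stmt11 {L : Type*} [CompleteLattice L]
    (a b c : L) (h1 : a < b ⊔ c) (h2 : ¬ a ≤ b) (h3 : ¬ a ≤ c)
    (f : Set (NZ L) → Set (NZ L))
    (hfdef : ∀ T : Set (NZ L),
      f T = {y | y ∈ T ∧ y.val ≠ b ⊔ c} ∪
        {y | (∃ t ∈ T, (t : NZ L).val = b ⊔ c) ∧
          (y.val = a ∨ y.val = b ∨ y.val = c)}) :
    UnionPres f ∧
      (∀ T : Set (NZ L), lsup (f T) = lsup T) ∧
      PresSup (id : L → L) ∧
      ∀ T : Set (NZ L), (id : L → L) (lsup T) = lsup (f T) := by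
  have key : ∀ T : Set (NZ L), lsup (f T) = lsup T := by
    intro T
    have up : ∀ (U : Set (NZ L)) (y : NZ L), y ∈ U → y.val ≤ lsup U :=
      fun U y hy => le_sSup ⟨y, hy, rfl⟩
    apply le_antisymm
    · apply sSup_le
      rintro _ ⟨y, hy, rfl⟩
      rw [hfdef] at hy
      rcases hy with ⟨hy, -⟩ | ⟨⟨t, ht, hte⟩, hy⟩
      · exact up T y hy
      · have hbc : b ⊔ c ≤ lsup T := hte ▸ up T t ht
        rcases hy with hy | hy | hy
        · rw [hy]; exact h1.le.trans hbc
        · rw [hy]; exact le_sup_left.trans hbc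
        · rw [hy]; exact le_sup_right.trans hbc
    · apply sSup_le
      rintro _ ⟨y, hy, rfl⟩
      by_cases hyb : y.val = b ⊔ c
      · rw [hyb]
        apply sup_le
        · by_cases hb : b = ⊥
          · rw [hb]; exact bot_le
          · refine up (f T) ⟨b, hb⟩ ?_
            rw [hfdef]
            exact Or.inr ⟨⟨y, hy, hyb⟩, Or.inr (Or.inl rfl)⟩
        · by_cases hc : c = ⊥
          · rw [hc]; exact bot_le
          · refine up (f T) ⟨c, hc⟩ ?_
            rw [hfdef]
            exact Or.inr ⟨⟨y, hy, hyb⟩, Or.inr (Or.inr rfl)⟩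
      · apply up (f T) y
        rw [hfdef]
        exact Or.inl ⟨hy, hyb⟩
  refine ⟨?_, key, ?_, fun T => (key T).symm⟩
  · intro ι T
    ext y
    simp only [hfdef, Set.mem_union, Set.mem_setOf_eq, Set.mem_iUnion]
    constructor
    · rintro (⟨⟨i, hi⟩, h⟩ | ⟨⟨t, ⟨i, hi⟩, ht⟩, h⟩)
      · exact ⟨i, Or.inl ⟨hi, h⟩⟩
      · exact ⟨i, Or.inr ⟨⟨t, hi, ht⟩, h⟩⟩
    · rintro ⟨i, ⟨hi, h⟩ | ⟨⟨t, hi, ht⟩, h⟩⟩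
      · exact Or.inl ⟨⟨i, hi⟩, h⟩
      · exact Or.inr ⟨⟨t, ⟨i, hi⟩, ht⟩, h⟩
  · intro S
    simp [sSup_eq_iSup]
end

section
/- Let L be a complete lattice containing elements a, b, c with a < b ⊔ c, ¬(a ≤ b) and ¬(a ≤ c), and let f : Set L₀ → Set L₀ be defined by f(T) = (T \ {b ⊔ c}) ∪ S, where S = {a, b, c} if b ⊔ c ∈ T and S = ∅ otherwise (all elements viewed in L₀). Then for every map g : L → L preserving arbitrary suprema such that 𝒫g(T) ⊆ f(T) for all T : Set L₀, one has g(a) = ⊥. -/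
theorem stmt12 {L : Type*} [CompleteLattice L]
    (a b c : L) (h1 : a < b ⊔ c) (h2 : ¬ a ≤ b) (h3 : ¬ a ≤ c)
    (f : Set (NZ L) → Set (NZ L))
    (hfdef : ∀ T : Set (NZ L),
      f T = {y | y ∈ T ∧ y.val ≠ b ⊔ c} ∪
        {y | (∃ t ∈ T, (t : NZ L).val = b ⊔ c) ∧
          (y.val = a ∨ y.val = b ∨ y.val = c)})
    (g : L → L) (hg : PresSup g)
    (hsub : ∀ T : Set (NZ L), dirIm g T ⊆ f T) :
    g a = ⊥ := by
  have key : ∀ x : L, x ≠ ⊥ → g x = ⊥ ∨ (g x = x ∧ x ≠ b ⊔ c) ∨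
      (x = b ⊔ c ∧ (g x = a ∨ g x = b ∨ g x = c)) := by
    intro x hx
    by_cases hgx : g x = ⊥
    · exact Or.inl hgx
    right
    have hm : (⟨g x, hgx⟩ : NZ L) ∈ f {⟨x, hx⟩} := hsub _ ⟨⟨x, hx⟩, rfl, rfl⟩
    rw [hfdef] at hm
    rcases hm with ⟨hy, hne⟩ | ⟨⟨t, ht, hte⟩, hy⟩
    · have hy' : g x = x := congrArg Subtype.val hy
      exact Or.inl ⟨hy', fun h => hne (hy'.trans h)⟩
    · have ht' : t.val = x := congrArg Subtype.val ht
      exact Or.inr ⟨ht'.symm.trans hte, hy⟩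
  have hsup : ∀ x y : L, g (x ⊔ y) = g x ⊔ g y := by
    intro x y
    have h := hg {x, y}
    rw [sSup_pair, iSup_pair] at h
    exact h
  by_contra hga
  have ha0 : a ≠ ⊥ := fun h => h2 (h ▸ bot_le)
  have hb0 : b ≠ ⊥ := by
    rintro rfl
    exact h3 (by simpa using h1.le)
  have hc0 : c ≠ ⊥ := by
    rintro rfl
    exact h2 (by simpa using h1.le)
  have hbb : b ≠ b ⊔ c := fun h => h2 (h1.le.trans h.ge)
  have hcc : c ≠ b ⊔ c := fun h => h3 (h1.le.trans h.ge)
  have hga' : g a = a := by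
    rcases key a ha0 with h | h | h
    · exact absurd h hga
    · exact h.1
    · exact absurd h.1 h1.ne
  have hle : a ≤ g (b ⊔ c) := by
    have h := hsup a (b ⊔ c)
    rw [sup_eq_right.2 h1.le, hga'] at h
    rw [h]
    exact le_sup_left
  have hb : g b = ⊥ ∨ g b = b := by
    rcases key b hb0 with h | h | h
    · exact Or.inl h
    · exact Or.inr h.1
    · exact absurd h.1 hbb
  have hc : g c = ⊥ ∨ g c = c := by
    rcases key c hc0 with h | h | h
    · exact Or.inl h
    · exact Or.inr h.1
    · exact absurd h.1 hcc
  have hbc0 : b ⊔ c ≠ ⊥ := fun h => hb0 (le_bot_iff.1 (h ▸ le_sup_left))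
  have hbc : g (b ⊔ c) = a := by
    rcases key (b ⊔ c) hbc0 with h | h | ⟨-, h | h | h⟩
    · exact absurd (le_bot_iff.1 (h ▸ hle)) ha0
    · exact absurd rfl h.2
    · exact h
    · exact absurd (h ▸ hle) h2
    · exact absurd (h ▸ hle) h3
  rw [hsup] at hbc
  rcases hb with h | h <;> rcases hc with h' | h' <;> rw [h, h'] at hbc
  · exact ha0 (by simpa using hbc.symm)
  · exact h3 (by simpa using hbc.ge)
  · exact h2 (by simpa using hbc.ge)
  · exact h1.ne hbc.symm
end

section
/- Let L be a complete lattice containing elements a, b, c with a < b ⊔ c, ¬(a ≤ b) and ¬(a ≤ c), and let f : Set L₀ → Set L₀ be defined by f(T) = (T \ {b ⊔ c}) ∪ S, where S = {a, b, c} if b ⊔ c ∈ T and S = ∅ otherwise (all elements viewed in L₀). Then there is no family (gᵢ)_{i ∈ I} of maps gᵢ : L → L, each preserving arbitrary suprema, such that f(T) = ⋃ᵢ 𝒫gᵢ(T) for every T : Set L₀. -/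
theorem stmt13 {L : Type*} [CompleteLattice L]
    (a b c : L) (h1 : a < b ⊔ c) (h2 : ¬ a ≤ b) (h3 : ¬ a ≤ c)
    (f : Set (NZ L) → Set (NZ L))
    (hfdef : ∀ T : Set (NZ L),
      f T = {y | y ∈ T ∧ y.val ≠ b ⊔ c} ∪
        {y | (∃ t ∈ T, (t : NZ L).val = b ⊔ c) ∧
          (y.val = a ∨ y.val = b ∨ y.val = c)}) :
    ¬ ∃ G : Set (L → L),
      (∀ g ∈ G, PresSup g) ∧
      ∀ T : Set (NZ L), f T = ⋃ g ∈ G, dirIm g T := by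
  rintro ⟨G, hG, hT⟩
  have ha : a ≠ ⊥ := fun h => h2 (h ▸ bot_le)
  have hbc : b ⊔ c ≠ ⊥ := fun h => ha (le_bot_iff.1 (h ▸ h1.le))
  have key : ∀ g ∈ G, ∀ x : L, x ≠ b ⊔ c → g x = ⊥ ∨ g x = x := by
    intro g hg x hx
    by_cases hgx : g x = ⊥
    · exact Or.inl hgx
    right
    have hx0 : x ≠ ⊥ := by
      rintro rfl
      apply hgx
      have := hG g hg ∅
      simpa using this
    have hm : (⟨g x, hgx⟩ : NZ L) ∈ f {⟨x, hx0⟩} := by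
      rw [hT]
      simp only [Set.mem_iUnion]
      exact ⟨g, hg, ⟨x, hx0⟩, rfl, rfl⟩
    rw [hfdef] at hm
    rcases hm with ⟨hm, _⟩ | ⟨⟨t, ht, ht'⟩, _⟩
    · exact congrArg Subtype.val hm
    · have ht2 : t = ⟨x, hx0⟩ := ht
      subst ht2
      exact absurd ht' hx
  have hm : (⟨a, ha⟩ : NZ L) ∈ f {⟨b ⊔ c, hbc⟩} := by
    rw [hfdef]
    exact Or.inr ⟨⟨_, rfl, rfl⟩, Or.inl rfl⟩
  rw [hT] at hm
  simp only [Set.mem_iUnion] at hm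
  obtain ⟨g, hg, t, ht, hgt⟩ := hm
  have ht2 : t = ⟨b ⊔ c, hbc⟩ := ht
  subst ht2
  have hgt' : g (b ⊔ c) = a := hgt
  have hs : g (b ⊔ c) = g b ⊔ g c := by
    have := hG g hg {b, c}
    rwa [sSup_pair, iSup_pair] at this
  have hb := key g hg b (fun h => h2 (h ▸ h1.le))
  have hc := key g hg c (fun h => h3 (h ▸ h1.le))
  rw [hs] at hgt'
  rcases hb with hb | hb <;> rcases hc with hc | hc <;> rw [hb, hc] at hgt'
  · exact ha (by simpa using hgt'.symm)
  · exact h3 (by simp [← hgt'])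
  · exact h2 (by simp [← hgt'])
  · exact h1.ne hgt'.symm
end
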